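/- Let T_n be uniformly distributed over the set 𝒯_n of plane trees with n edges, where each tree carries a distinguished oriented edge, initially the edge going from the first child of the root ρ towards ρ. Conditionally on T_n, let X_1 be a uniformly chosen neighbour of ρ, and let T_n^{(1)} be the plane tree obtained from T_n by keeping the planar ordering but changing the distinguished oriented edge to (ρ, X_1). Then T_n^{(1)} is uniformly distributed over 𝒯_n. -/

import Mathlib

open MeasureTheory ProbabilityTheory
open scoped ENNReal

/-- A plane tree: a rooted tree in which the children of each vertex are linearly
ordered (given by the list of the subtrees of the root). -/
inductive PlaneTree : Type where
  | node : List PlaneTree → PlaneTree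

namespace PlaneTree

/-- We endow the countable type of plane trees with the discrete σ-algebra. -/
instance : MeasurableSpace PlaneTree := ⊤

/-- Membership of an Ulam–Harris label (list of successive child indices) in a plane
tree. -/
def mem : PlaneTree → List ℕ → Bool
  | _, [] => true
  | node [], _ :: _ => false
  | node (t :: _), 0 :: u => t.mem u
  | node (_ :: ts), (i + 1) :: u => (node ts).mem (i :: u)

/-- The number of vertices of a plane tree. -/
noncomputable def vertexCount (t : PlaneTree) : ℕ :=
  Nat.card {u : List ℕ | t.mem u = true}

/-- The number of edges of a plane tree. -/
noncomputable def edgeCount (t : PlaneTree) : ℕ :=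
  t.vertexCount - 1

/-- The degree of the root of a plane tree, i.e. its number of children (the root has no
parent, so its neighbours are exactly its children). -/
def rootDeg : PlaneTree → ℕ
  | node ts => ts.length

/-- Re-rooting a plane tree at the `i`-th child `X₁` of its root `ρ` (for `i < rootDeg`),
i.e. changing the distinguished oriented edge to `(ρ, X₁)`: the new root is `X₁`, its
first child is `ρ`, and the planar (cyclic) ordering around every vertex is preserved:
the children of `ρ` become, in order, those after `X₁` followed by those before `X₁`. -/
def reroot : PlaneTree → ℕ → PlaneTree
  | node ts, i =>
    match ts[i]? with
    | some (node cs) => node (node (ts.drop (i + 1) ++ ts.take i) :: cs)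
    | none => node ts

end PlaneTree

namespace PlaneTree

/-- The vertices of `node (t :: ts)` split into those of its first branch `t` and those of
`node ts`, the tree with that branch removed. -/
def verticesConsEquiv (t : PlaneTree) (ts : List PlaneTree) :
    {u : List ℕ | t.mem u = true} ⊕ {u : List ℕ | (node ts).mem u = true} ≃
      {u : List ℕ | (node (t :: ts)).mem u = true} where
  toFun
    | .inl ⟨u, hu⟩ => ⟨0 :: u, by simpa [mem] using hu⟩
    | .inr ⟨[], _⟩ => ⟨[], by simp [mem]⟩
    | .inr ⟨i :: u, hu⟩ => ⟨(i + 1) :: u, by simpa [mem] using hu⟩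
  invFun
    | ⟨[], _⟩ => .inr ⟨[], by simp [mem]⟩
    | ⟨0 :: u, hu⟩ => .inl ⟨u, by simpa [mem] using hu⟩
    | ⟨(i + 1) :: u, hu⟩ => .inr ⟨i :: u, by simpa [mem] using hu⟩
  left_inv := by rintro (⟨u, hu⟩ | ⟨_ | ⟨i, u⟩, hu⟩) <;> rfl
  right_inv := by rintro ⟨_ | ⟨_ | i, u⟩, hu⟩ <;> rfl

theorem vertices_nil : {u : List ℕ | (node []).mem u = true} = {[]} := by
  ext u
  cases u <;> simp [mem]

theorem finite_vertices : ∀ t : PlaneTree, Finite {u : List ℕ | t.mem u = true}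
  | node [] => by rw [vertices_nil]; infer_instance
  | node (t :: ts) =>
    have := finite_vertices t
    have := finite_vertices (node ts)
    Finite.of_equiv _ (verticesConsEquiv t ts)

theorem vertexCount_node (ts : List PlaneTree) :
    (node ts).vertexCount = (ts.map vertexCount).sum + 1 := by
  induction ts with
  | nil => rw [vertexCount, vertices_nil]; simp
  | cons t ts ih =>
    have := finite_vertices t
    have := finite_vertices (node ts)
    have h : (node (t :: ts)).vertexCount = t.vertexCount + (node ts).vertexCount := by
      simp only [vertexCount]
      rw [← Nat.card_congr (verticesConsEquiv t ts), Nat.card_sum]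
    rw [h, ih, List.map_cons, List.sum_cons, add_assoc]

/-- The tree whose re-rooting at its `i`-th child is `node (node ds :: cs)`. -/
def unroot (ds cs : List PlaneTree) (i : ℕ) : PlaneTree :=
  node (ds.drop (ds.length - i) ++ node cs :: ds.take (ds.length - i))

theorem rootDeg_unroot (ds cs : List PlaneTree) (i : ℕ) :
    (unroot ds cs i).rootDeg = ds.length + 1 := by
  simp only [unroot, rootDeg, List.length_append, List.length_drop, List.length_cons,
    List.length_take]
  omega

theorem edgeCount_unroot (ds cs : List PlaneTree) (i : ℕ) :
    (unroot ds cs i).edgeCount = (node (node ds :: cs)).edgeCount := by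
  have h : (ds.map vertexCount).sum = ((ds.take (ds.length - i)).map vertexCount).sum +
      ((ds.drop (ds.length - i)).map vertexCount).sum := by
    rw [← List.sum_append, ← List.map_append, List.take_append_drop]
  simp only [unroot, edgeCount, vertexCount_node, List.map_append, List.map_cons,
    List.sum_append, List.sum_cons, h]
  omega

theorem reroot_of_rootDeg_le {t : PlaneTree} {i : ℕ} (h : t.rootDeg ≤ i) :
    t.reroot i = t := by
  obtain ⟨ts⟩ := t
  have : ts[i]? = none := List.getElem?_eq_none h
  simp [reroot, this]

theorem reroot_unroot (ds cs : List PlaneTree) {i : ℕ} (h : i ≤ ds.length) :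
    (unroot ds cs i).reroot i = node (node ds :: cs) := by
  have hl : (ds.drop (ds.length - i)).length = i := by simp; omega
  have hi : (ds.drop (ds.length - i) ++ node cs :: ds.take (ds.length - i))[i]? =
      some (node cs) := by
    rw [List.getElem?_append_right hl.le, hl]; simp
  have hd : (ds.drop (ds.length - i) ++ node cs :: ds.take (ds.length - i)).drop (i + 1) =
      ds.take (ds.length - i) := by
    rw [List.drop_append, hl, List.drop_eq_nil_of_le (by omega)]; simp
  have ht : (ds.drop (ds.length - i) ++ node cs :: ds.take (ds.length - i)).take i =
      ds.drop (ds.length - i) := List.take_left' hl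
  simp only [unroot, reroot, hi, hd, ht, List.take_append_drop]

theorem eq_unroot_of_reroot_eq {t : PlaneTree} {ds cs : List PlaneTree} {i : ℕ}
    (hi : i < t.rootDeg) (h : t.reroot i = node (node ds :: cs)) :
    i ≤ ds.length ∧ t = unroot ds cs i := by
  obtain ⟨ts⟩ := t
  change i < ts.length at hi
  obtain ⟨cs', hcs⟩ : ∃ cs', ts[i] = node cs' := by
    cases hc : ts[i] with
    | node cs' => exact ⟨cs', rfl⟩
  have hget : ts[i]? = some (node cs') := by rw [List.getElem?_eq_getElem hi, hcs]
  simp only [reroot, hget, node.injEq, List.cons.injEq] at h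
  obtain ⟨rfl, rfl⟩ := h
  have hlen : (ts.drop (i + 1) ++ ts.take i).length = ts.length - 1 := by simp; omega
  have hk : (ts.drop (i + 1)).length = ts.length - 1 - i := by simp; omega
  refine ⟨by omega, ?_⟩
  rw [unroot, hlen, List.drop_left' hk, List.take_left' hk, ← hcs,
    ← List.drop_eq_getElem_cons hi, List.take_append_drop]

theorem reroot_eq_iff {t : PlaneTree} {ds cs : List PlaneTree} {i : ℕ}
    (hi : i < t.rootDeg) :
    t.reroot i = node (node ds :: cs) ↔ i ≤ ds.length ∧ t = unroot ds cs i := by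
  refine ⟨eq_unroot_of_reroot_eq hi, ?_⟩
  rintro ⟨hle, rfl⟩
  exact reroot_unroot ds cs hle

theorem exists_eq_node_cons_of_edgeCount_pos {t : PlaneTree} (h : 1 ≤ t.edgeCount) :
    ∃ ds cs, t = node (node ds :: cs) := by
  match t with
  | node [] => simp [edgeCount, vertexCount_node] at h
  | node (node ds :: cs) => exact ⟨ds, cs, rfl⟩

/-- One step of re-rooting at a uniform neighbour preserves the law of a random tree which
is uniform given its number of edges. -/
theorem measure_reroot_eq {Ω : Type*} [MeasurableSpace Ω] (P : Measure Ω)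
    (n : ℕ) (hn : 1 ≤ n) (Tn : Ω → PlaneTree) (X : Ω → ℕ)
    (hTm : Measurable Tn) (hXm : Measurable X)
    (hunif : ∀ τ τ' : PlaneTree, τ.edgeCount = n → τ'.edgeCount = n →
      P {ω | Tn ω = τ} = P {ω | Tn ω = τ'})
    (hcond : ∀ τ : PlaneTree, ∀ i : ℕ,
      (i < τ.rootDeg →
        P {ω | Tn ω = τ ∧ X ω = i} = P {ω | Tn ω = τ} / (τ.rootDeg : ℝ≥0∞)) ∧
      (τ.rootDeg ≤ i → P {ω | Tn ω = τ ∧ X ω = i} = 0))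
    (τ : PlaneTree) (hτ : τ.edgeCount = n) :
    P {ω | (Tn ω).reroot (X ω) = τ} = P {ω | Tn ω = τ} := by
  obtain ⟨ds, cs, rfl⟩ := exists_eq_node_cons_of_edgeCount_pos (hτ ▸ hn)
  set τ := node (node ds :: cs)
  have hmeas (σ : PlaneTree) (i : ℕ) : MeasurableSet {ω | Tn ω = σ ∧ X ω = i} :=
    (hTm (show MeasurableSet {σ} from trivial)).inter (hXm (measurableSet_singleton i))
  have hnull : P (⋃ i, ⋃ (_ : τ.rootDeg ≤ i), {ω | Tn ω = τ ∧ X ω = i}) = 0 := by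
    simp only [measure_iUnion_null_iff]
    exact fun i hi => (hcond τ i).2 hi
  have hae : {ω | (Tn ω).reroot (X ω) = τ} =ᵐ[P]
      ⋃ i ∈ Finset.range (ds.length + 1), {ω | Tn ω = unroot ds cs i ∧ X ω = i} := by
    filter_upwards [measure_eq_zero_iff_ae_notMem.mp hnull] with ω hω
    refine propext ?_
    change (Tn ω).reroot (X ω) = τ ↔ ω ∈ ⋃ i ∈ Finset.range (ds.length + 1), _
    simp only [Set.mem_iUnion, Set.mem_ofPred_eq, exists_prop, not_exists, not_and,
      Finset.mem_range, Nat.lt_succ_iff] at hω ⊢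
    constructor
    · intro h
      have hlt : X ω < (Tn ω).rootDeg := by
        by_contra! hge
        rw [reroot_of_rootDeg_le hge] at h
        exact hω _ (h ▸ hge) h rfl
      obtain ⟨hle, heq⟩ := (reroot_eq_iff hlt).mp h
      exact ⟨_, hle, heq, rfl⟩
    · rintro ⟨i, hle, heq, hX⟩
      rw [heq, hX]
      exact reroot_unroot ds cs hle
  rw [measure_congr hae, measure_biUnion_finset _ fun i _ => hmeas _ _]
  · have hterm : ∀ i ∈ Finset.range (ds.length + 1),
        P {ω | Tn ω = unroot ds cs i ∧ X ω = i} =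
          P {ω | Tn ω = τ} / ((ds.length + 1 : ℕ) : ℝ≥0∞) := by
      intro i hi
      rw [(hcond _ i).1 (by rw [rootDeg_unroot]; exact Finset.mem_range.mp hi),
        rootDeg_unroot, hunif _ τ ((edgeCount_unroot ds cs i).trans hτ) hτ]
    rw [Finset.sum_congr rfl hterm, Finset.sum_const, Finset.card_range, nsmul_eq_mul]
    exact ENNReal.mul_div_cancel (by simp) (ENNReal.natCast_ne_top _)
  · intro i _ j _ hij
    exact Set.disjoint_left.mpr fun ω hi hj => hij (hi.2.symm.trans hj.2)

end PlaneTree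

/-- Let `T_n` be uniformly distributed over the set `𝒯_n` of plane trees with `n` edges
(each tree carrying the distinguished oriented edge going from the first child of the
root towards the root), and conditionally on `T_n` let `X₁` be a uniformly chosen
neighbour of the root, encoded by the uniform child index `X`.  Then the tree
`T_n^{(1)}`, obtained by keeping the planar ordering and changing the distinguished
oriented edge to `(ρ, X₁)` (i.e. re-rooting at `X₁`), is uniformly distributed
over `𝒯_n`. -/
theorem rerooted_uniform_tree_is_uniform
    {Ω : Type*} [MeasurableSpace Ω] (P : Measure Ω) [IsProbabilityMeasure P]
    (n : ℕ) (hn : 1 ≤ n) (Tn : Ω → PlaneTree) (X : Ω → ℕ)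
    (hTm : Measurable Tn) (hXm : Measurable X)
    (hsupp : P {ω | (Tn ω).edgeCount = n} = 1)
    (hunif : ∀ τ τ' : PlaneTree, τ.edgeCount = n → τ'.edgeCount = n →
      P {ω | Tn ω = τ} = P {ω | Tn ω = τ'})
    (hcond : ∀ τ : PlaneTree, ∀ i : ℕ,
      (i < τ.rootDeg →
        P {ω | Tn ω = τ ∧ X ω = i} = P {ω | Tn ω = τ} / (τ.rootDeg : ℝ≥0∞)) ∧
      (τ.rootDeg ≤ i → P {ω | Tn ω = τ ∧ X ω = i} = 0)) :
    ∀ τ τ' : PlaneTree, τ.edgeCount = n → τ'.edgeCount = n →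
      P {ω | (Tn ω).reroot (X ω) = τ} = P {ω | (Tn ω).reroot (X ω) = τ'} := by
  intro τ τ' hτ hτ'
  rw [PlaneTree.measure_reroot_eq P n hn Tn X hTm hXm hunif hcond τ hτ,
    PlaneTree.measure_reroot_eq P n hn Tn X hTm hXm hunif hcond τ' hτ']
  exact hunif τ τ' hτ hτ'
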